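/- Let v ∈ ℕ₀, m ∈ ℤⁿ, ε > 0 and N > 0, and let E ⊆ Q_{v,m} be a measurable set with |E| > ε|Q_{v,m}|. Then for every x ∈ Q_{v,m} one has (η_{v,N} ∗ χ_E)(x) ≥ ε(1 + √n)^{−N}; equivalently, χ_{Q_{v,m}} ≤ ε^{−1}(1 + √n)^{N} · (η_{v,N} ∗ χ_E) pointwise on ℝⁿ. -/

import Mathlib

/-!
For `x, y ∈ Q_{v,m}` each coordinate satisfies `2^v |x_i - y_i| ≤ 1`, hence `2^v ‖x - y‖ ≤ √n` and,
the profile being decreasing, `η_{v,N}(x - y) ≥ 2^{nv} (1 + √n)^{-N}` (`le_eta_sub`). Integrating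
this over `y ∈ E` gives at least `2^{nv} |E| (1 + √n)^{-N}`, and `2^{nv} |E| > ε` because
`|Q_{v,m}| = 2^{-nv}` (`volume_dyadicCube`). The second form of the estimate is a rearrangement of
the first on the cube; off the cube it only says that the convolution is nonnegative.
-/

noncomputable section
open MeasureTheory ENNReal Set
open scoped ENNReal

abbrev Rn (n : ℕ) := EuclideanSpace ℝ (Fin n)

/-- The dyadic cube `Q_{v,m}` (with `v ∈ ℕ₀`, so `|Q_{v,m}| = 2^{-vn}`). -/
def dyadicCube (n : ℕ) (v : ℕ) (m : Fin n → ℤ) : Set (Rn n) :=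
  {x | ∀ i, (m i : ℝ) ≤ 2 ^ v * x i ∧ 2 ^ v * x i < m i + 1}

/-- `η_{v,N}(x) = 2^{nv}(1+2^v|x|)^{-N}`. -/
def eta (n : ℕ) (v : ℕ) (N : ℝ) (x : Rn n) : ℝ :=
  2 ^ (n * v) * (1 + 2 ^ v * ‖x‖) ^ (-N)

/-- Convolution on `ℝⁿ`. -/
def conv (n : ℕ) (f g : Rn n → ℝ) (x : Rn n) : ℝ :=
  ∫ y, f (x - y) * g y

theorem volume_dyadicCube (n v : ℕ) (m : Fin n → ℤ) :
    volume (dyadicCube n v m) = ENNReal.ofReal (((2 : ℝ) ^ (n * v))⁻¹) := by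
  have h2 : (0 : ℝ) < 2 ^ v := by positivity
  have hset : dyadicCube n v m = (WithLp.ofLp : Rn n → (Fin n → ℝ)) ⁻¹'
      (Set.pi univ fun i => Ico ((m i : ℝ) / 2 ^ v) ((m i + 1) / 2 ^ v)) := by
    ext x
    simp only [dyadicCube, mem_ofPred_eq, mem_preimage, mem_pi, mem_univ, forall_true_left, mem_Ico,
      div_le_iff₀' h2, lt_div_iff₀' h2]
  rw [hset, (PiLp.volume_preserving_ofLp (Fin n)).measure_preimage
    (MeasurableSet.univ_pi fun i => measurableSet_Ico).nullMeasurableSet, volume_pi_pi]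
  have hside : ∀ i, volume (Ico ((m i : ℝ) / 2 ^ v) ((m i + 1) / 2 ^ v))
      = ENNReal.ofReal (((2 : ℝ) ^ v)⁻¹) := by
    intro i
    rw [Real.volume_Ico]
    congr 1
    field_simp
    ring
  simp only [hside, Finset.prod_const, Finset.card_univ, Fintype.card_fin]
  rw [← ENNReal.ofReal_pow (by positivity), inv_pow, ← pow_mul, mul_comm v n]

/-- The rescaled distance between two points of a cube of side `2^{-v}` is at most the diameter
`√n` of the unit cube. -/
theorem norm_sub_le_of_mem_dyadicCube {n v : ℕ} {m : Fin n → ℤ} {x y : Rn n}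
    (hx : x ∈ dyadicCube n v m) (hy : y ∈ dyadicCube n v m) :
    2 ^ v * ‖x - y‖ ≤ Real.sqrt n := by
  have h2 : (0 : ℝ) < 2 ^ v := by positivity
  have hscale : 2 ^ v * ‖x - y‖ = ‖(2 ^ v : ℝ) • (x - y)‖ := by
    rw [norm_smul, Real.norm_of_nonneg h2.le]
  rw [hscale, EuclideanSpace.norm_eq]
  apply Real.sqrt_le_sqrt
  have hcoord : ∀ i, ‖((2 ^ v : ℝ) • (x - y)) i‖ ^ 2 ≤ 1 := by
    intro i
    have hxi := hx i
    have hyi := hy i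
    have hi : ((2 ^ v : ℝ) • (x - y)) i = 2 ^ v * x i - 2 ^ v * y i := by
      simp [mul_sub]
    rw [hi, Real.norm_eq_abs, sq_abs, sq_le_one_iff_abs_le_one, abs_le]
    constructor <;> linarith
  calc ∑ i, ‖((2 ^ v : ℝ) • (x - y)) i‖ ^ 2 ≤ ∑ _i : Fin n, (1 : ℝ) :=
        Finset.sum_le_sum fun i _ => hcoord i
    _ = n := by simp

theorem le_eta_sub {n v : ℕ} {m : Fin n → ℤ} {N : ℝ} (hN : 0 < N) {x y : Rn n}
    (hx : x ∈ dyadicCube n v m) (hy : y ∈ dyadicCube n v m) :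
    2 ^ (n * v) * (1 + Real.sqrt n) ^ (-N) ≤ eta n v N (x - y) := by
  unfold eta
  refine mul_le_mul_of_nonneg_left ?_ (by positivity)
  exact Real.rpow_le_rpow_of_nonpos (by positivity)
    (by linarith [norm_sub_le_of_mem_dyadicCube hx hy]) (by linarith)

theorem eta_nonneg (n v : ℕ) (N : ℝ) (x : Rn n) : 0 ≤ eta n v N x := by
  unfold eta
  positivity

theorem eta_le {n v : ℕ} {N : ℝ} (hN : 0 < N) (x : Rn n) : eta n v N x ≤ 2 ^ (n * v) := by
  unfold eta
  refine mul_le_of_le_one_right (by positivity) ?_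
  refine Real.rpow_le_one_of_one_le_of_nonpos ?_ (by linarith)
  have : (0 : ℝ) ≤ 2 ^ v * ‖x‖ := by positivity
  linarith

theorem continuous_eta (n v : ℕ) (N : ℝ) : Continuous (eta n v N) := by
  unfold eta
  refine continuous_const.mul (Continuous.rpow_const (by fun_prop) fun x => Or.inl ?_)
  positivity

theorem conv_indicator (n : ℕ) (f : Rn n → ℝ) {E : Set (Rn n)} (hE : MeasurableSet E) (x : Rn n) :
    conv n f (E.indicator fun _ => (1 : ℝ)) x = ∫ y in E, f (x - y) := by
  unfold conv
  rw [← integral_indicator hE]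
  congr 1
  ext y
  by_cases hy : y ∈ E <;> simp [hy]

theorem statement5 (n : ℕ) (hn : 1 ≤ n) (v : ℕ) (m : Fin n → ℤ) (ε N : ℝ)
    (hε : 0 < ε) (hN : 0 < N) (E : Set (Rn n)) (hEmeas : MeasurableSet E)
    (hEsub : E ⊆ dyadicCube n v m)
    (hEvol : ENNReal.ofReal ε * volume (dyadicCube n v m) < volume E) :
    (∀ x ∈ dyadicCube n v m,
      ε * (1 + Real.sqrt n) ^ (-N) ≤ conv n (eta n v N) (E.indicator fun _ => (1 : ℝ)) x) ∧
    (∀ x : Rn n, (dyadicCube n v m).indicator (fun _ => (1 : ℝ)) x ≤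
      ε⁻¹ * (1 + Real.sqrt n) ^ N * conv n (eta n v N) (E.indicator fun _ => (1 : ℝ)) x) := by
  have hEfin : volume E ≠ ∞ :=
    ((measure_mono hEsub).trans_lt (volume_dyadicCube n v m ▸ ENNReal.ofReal_lt_top)).ne
  have hvol : ε * ((2 : ℝ) ^ (n * v))⁻¹ ≤ volume.real E := by
    rw [volume_dyadicCube, ← ENNReal.ofReal_mul hε.le] at hEvol
    exact (ENNReal.ofReal_le_iff_le_toReal hEfin).1 hEvol.le
  have hA : (0 : ℝ) < (1 + Real.sqrt n) ^ (-N) := by positivity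
  have hP : (0 : ℝ) < 2 ^ (n * v) := by positivity
  have key : ∀ x ∈ dyadicCube n v m,
      ε * (1 + Real.sqrt n) ^ (-N) ≤ conv n (eta n v N) (E.indicator fun _ => (1 : ℝ)) x := by
    intro x hx
    rw [conv_indicator n _ hEmeas]
    -- Integrability matters here: otherwise the Bochner integral would be `0`.
    have hint : IntegrableOn (fun y => eta n v N (x - y)) E := by
      refine IntegrableOn.of_bound hEfin.lt_top
        ((continuous_eta n v N).comp (continuous_const.sub continuous_id)).aestronglyMeasurable
        (2 ^ (n * v)) (Filter.Eventually.of_forall fun y => ?_)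
      rw [Real.norm_of_nonneg (eta_nonneg _ _ _ _)]
      exact eta_le hN _
    calc ε * (1 + Real.sqrt n) ^ (-N)
        = ε * ((2 : ℝ) ^ (n * v))⁻¹ * (2 ^ (n * v) * (1 + Real.sqrt n) ^ (-N)) := by
          field_simp
      _ ≤ volume.real E * (2 ^ (n * v) * (1 + Real.sqrt n) ^ (-N)) := by gcongr
      _ = ∫ _y in E, (2 ^ (n * v) * (1 + Real.sqrt n) ^ (-N) : ℝ) := by
          rw [setIntegral_const, smul_eq_mul]
      _ ≤ ∫ y in E, eta n v N (x - y) :=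
          setIntegral_mono_on (integrableOn_const hEfin) hint hEmeas
            fun y hy => le_eta_sub hN hx (hEsub hy)
  refine ⟨key, fun x => ?_⟩
  by_cases hx : x ∈ dyadicCube n v m
  · rw [indicator_of_mem hx]
    have hB : (0 : ℝ) < (1 + Real.sqrt n) ^ N := by positivity
    calc (1 : ℝ) = ε⁻¹ * (1 + Real.sqrt n) ^ N * (ε * (1 + Real.sqrt n) ^ (-N)) := by
          rw [Real.rpow_neg (by positivity)]
          field_simp
      _ ≤ _ := mul_le_mul_of_nonneg_left (key x hx) (by positivity)
  · rw [indicator_of_notMem hx, conv_indicator n _ hEmeas]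
    have : 0 ≤ ∫ y in E, eta n v N (x - y) := integral_nonneg fun y => eta_nonneg _ _ _ _
    positivity

end
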